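/- arXiv:2302.14151 — 9 statements merged into one kernel-verified Lean document; each statement's English description precedes it below -/
import Mathlib

section
/- For the bilinear set over a network polytope with a single simplex variable (m = 1), every extreme point of the normalized projection-cone restriction C^l has all of its components in {0,1}; i.e., every extreme point of C^l corresponding to a class-l EC&R inequality can be scaled so that all aggregation weights are 0 or 1. -/
/-- Weight vector for the `m = 1` EC&R projection cone over a network polytope:
components `γ⁺ γ⁻ θ⁺ θ⁻ : V → ℝ` (weights of positive/negative flow-balance constraints
multiplied by `y₁` resp. `1 - y₁`) and `λ μ η ρ β⁺ β⁻ : A → ℝ` (weights of bound and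
bilinear constraints), in this order. -/
abbrev ECRWeights (V A : Type) : Type :=
  (V → ℝ) × (V → ℝ) × (V → ℝ) × (V → ℝ) ×
  (A → ℝ) × (A → ℝ) × (A → ℝ) × (A → ℝ) × (A → ℝ) × (A → ℝ)

namespace ECRWeights

variable {V A : Type}

def γp (w : ECRWeights V A) : V → ℝ := w.1
def γm (w : ECRWeights V A) : V → ℝ := w.2.1
def θp (w : ECRWeights V A) : V → ℝ := w.2.2.1
def θm (w : ECRWeights V A) : V → ℝ := w.2.2.2.1
def lam (w : ECRWeights V A) : A → ℝ := w.2.2.2.2.1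
def mu (w : ECRWeights V A) : A → ℝ := w.2.2.2.2.2.1
def η (w : ECRWeights V A) : A → ℝ := w.2.2.2.2.2.2.1
def ρ (w : ECRWeights V A) : A → ℝ := w.2.2.2.2.2.2.2.1
def βp (w : ECRWeights V A) : A → ℝ := w.2.2.2.2.2.2.2.2.1
def βm (w : ECRWeights V A) : A → ℝ := w.2.2.2.2.2.2.2.2.2

end ECRWeights

open ECRWeights in
/-- Membership in the normalized projection-cone restriction `C^l` for the `m = 1` case. -/
def memCl {V A : Type} [Fintype V] [DecidableEq A]
    (E : V → A → ℝ) (l : A) (s : ℝ) (w : ECRWeights V A) : Prop :=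
  (∀ v, 0 ≤ γp w v) ∧ (∀ v, 0 ≤ γm w v) ∧ (∀ v, 0 ≤ θp w v) ∧ (∀ v, 0 ≤ θm w v) ∧
  (∀ a, 0 ≤ lam w a) ∧ (∀ a, 0 ≤ mu w a) ∧ (∀ a, 0 ≤ η w a) ∧ (∀ a, 0 ≤ ρ w a) ∧
  (∀ a, 0 ≤ βp w a) ∧ (∀ a, 0 ≤ βm w a) ∧
  βp w l = 0 ∧ βm w l = 0 ∧
  ∀ a, (∑ v, E v a * ((γp w v - γm w v) - (θp w v - θm w v)))
      + η w a - ρ w a - lam w a + mu w a + βp w a - βm w a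
      = s * (if a = l then 1 else 0)

open ECRWeights in
/-- Multiplicative perturbation principle at an extreme point. -/
lemma ecr_key {V A : Type} [Fintype V] [Fintype A] [DecidableEq A]
    (E : V → A → ℝ) (l : A) (s : ℝ) (w : ECRWeights V A)
    (hw : w ∈ Set.extremePoints ℝ {w' : ECRWeights V A | memCl E l s w'})
    (e : ECRWeights V A)
    (he : ∀ a, (∑ v, E v a * ((γp w v * γp e v - γm w v * γm e v)
        - (θp w v * θp e v - θm w v * θm e v)))
      + η w a * η e a - ρ w a * ρ e a - lam w a * lam e a + mu w a * mu e a
      + βp w a * βp e a - βm w a * βm e a = 0) :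
    w * e = 0 := by
  obtain ⟨M, hM0, hM⟩ : ∃ M : ℝ, 0 < M ∧ ‖e‖ ≤ M := ⟨‖e‖ + 1, by positivity, by linarith⟩
  have hmem : ∀ c : ℝ, |c| * M ≤ 1 → memCl E l s (w + c • (w * e)) := by
    intro c hc
    have hb : ∀ x y : ℝ, 0 ≤ x → |y| ≤ M → 0 ≤ x + c * (x * y) := by
      intro x y hx hy
      have h1 : |c * y| ≤ 1 := by
        rw [abs_mul]
        exact (mul_le_mul_of_nonneg_left hy (abs_nonneg c)).trans hc
      have h2 := (abs_le.mp h1).1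
      have : x + c * (x * y) = x * (1 + c * y) := by ring
      rw [this]
      exact mul_nonneg hx (by linarith)
    obtain ⟨e1, e2, e3, e4, f1, f2, f3, f4, f5, f6⟩ := e
    obtain ⟨w1, w2, w3, w4, g1, g2, g3, g4, g5, g6⟩ := w
    simp only [Prod.norm_def, sup_le_iff, pi_norm_le_iff_of_nonneg hM0.le, Real.norm_eq_abs] at hM
    obtain ⟨a1, a2, a3, a4, b1, b2, b3, b4, b5, b6⟩ := hM
    obtain ⟨p1, p2, p3, p4, q1, q2, q3, q4, q5, q6, z1, z2, heq⟩ := hw.1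
    simp only [γp, γm, θp, θm, lam, mu, η, ρ, βp, βm] at *
    refine ⟨fun v => hb _ _ (p1 v) (a1 v), fun v => hb _ _ (p2 v) (a2 v),
      fun v => hb _ _ (p3 v) (a3 v), fun v => hb _ _ (p4 v) (a4 v),
      fun v => hb _ _ (q1 v) (b1 v), fun v => hb _ _ (q2 v) (b2 v),
      fun v => hb _ _ (q3 v) (b3 v), fun v => hb _ _ (q4 v) (b4 v),
      fun v => hb _ _ (q5 v) (b5 v), fun v => hb _ _ (q6 v) (b6 v), ?_, ?_, ?_⟩
    · simp [βp, z1]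
    · simp [βm, z2]
    · intro a
      have h1 := heq a
      have h2 := he a
      simp only [γp, γm, θp, θm, lam, mu, η, ρ, βp, βm, Prod.mk_mul_mk, Prod.smul_mk,
        Prod.mk_add_mk, Pi.add_apply, Pi.smul_apply, Pi.mul_apply, smul_eq_mul]
      rw [← h1]
      have h3 : ∑ v, E v a * ((w1 v + c * (w1 v * e1 v) - (w2 v + c * (w2 v * e2 v)))
          - (w3 v + c * (w3 v * e3 v) - (w4 v + c * (w4 v * e4 v))))
          = ∑ v, E v a * ((w1 v - w2 v) - (w3 v - w4 v))
          + c * ∑ v, E v a * ((w1 v * e1 v - w2 v * e2 v) - (w3 v * e3 v - w4 v * e4 v)) := by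
        rw [Finset.mul_sum, ← Finset.sum_add_distrib]
        exact Finset.sum_congr rfl fun v _ => by ring
      rw [h3]
      linear_combination c * h2
  have hMi : |M⁻¹| * M ≤ 1 := by
    rw [abs_of_pos (by positivity), inv_mul_cancel₀ hM0.ne']
  have m1 := hmem M⁻¹ hMi
  have m2 := hmem (-M⁻¹) (by rwa [abs_neg])
  have := hw.2 m1 m2 ⟨1/2, 1/2, by norm_num, by norm_num, by norm_num, by
    module⟩
  have h0 : M⁻¹ • (w * e) = 0 := by simpa using this
  exact (smul_eq_zero.mp h0).resolve_left (by positivity)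

/-- Integer-valued balance plus exclusivity. -/
lemma zero_one_of_sq {x P : ℝ} (hx : 0 ≤ x) (hP : P = 0 ∨ P = 1 ∨ P = -1)
    (h : x * x = x * P ∨ x * x = - (x * P)) : x = 0 ∨ x = 1 := by
  by_cases h0 : x = 0
  · exact Or.inl h0
  · right
    have h1 : x = P ∨ x = -P := by
      rcases h with h | h
      · exact Or.inl (mul_left_cancel₀ h0 h)
      · exact Or.inr (mul_left_cancel₀ h0 (by linarith))
    rcases hP with rfl | rfl | rfl <;> rcases h1 with h1 | h1 <;> first | linarith | skip
    · exact absurd h1 h0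
    · exact absurd (by simpa using h1) h0

open ECRWeights in
/-- For the bilinear set over a network polytope with a single simplex variable (`m = 1`),
every extreme point of the normalized projection-cone restriction `C^l` has all of its
components in `{0, 1}`. -/
theorem extremePoint_mem_Cl_zero_one
    {V A : Type} [Fintype V] [Fintype A] [DecidableEq V] [DecidableEq A]
    (t h : A → V) (hloop : ∀ a, t a ≠ h a)
    (E : V → A → ℝ)
    (hE : ∀ v a, E v a = (if t a = v then (1 : ℝ) else 0) - (if h a = v then 1 else 0))
    (l : A) (s : ℝ) (hs : s = 1 ∨ s = -1)
    (w : ECRWeights V A)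
    (hw : w ∈ Set.extremePoints ℝ {w' : ECRWeights V A | memCl E l s w'}) :
    (∀ v, γp w v = 0 ∨ γp w v = 1) ∧ (∀ v, γm w v = 0 ∨ γm w v = 1) ∧
    (∀ v, θp w v = 0 ∨ θp w v = 1) ∧ (∀ v, θm w v = 0 ∨ θm w v = 1) ∧
    (∀ a, lam w a = 0 ∨ lam w a = 1) ∧ (∀ a, mu w a = 0 ∨ mu w a = 1) ∧
    (∀ a, η w a = 0 ∨ η w a = 1) ∧ (∀ a, ρ w a = 0 ∨ ρ w a = 1) ∧
    (∀ a, βp w a = 0 ∨ βp w a = 1) ∧ (∀ a, βm w a = 0 ∨ βm w a = 1) := by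
  have key := ecr_key E l s w hw
  have hsum : ∀ (q : V → ℝ) (a : A), ∑ v, E v a * q v = q (t a) - q (h a) := by
    intro q a
    simp [hE, sub_mul, Finset.sum_sub_distrib]
  obtain ⟨p1, p2, p3, p4, q1, q2, q3, q4, q5, q6, -, -, heq⟩ := hw.1
  set p : V → ℝ := fun v => (γp w v - γm w v) - (θp w v - θm w v) with hp
  set R : A → ℝ := fun a => η w a - ρ w a - lam w a + mu w a + βp w a - βm w a with hR
  have hbal : ∀ a, p (t a) - p (h a) + R a = s * (if a = l then 1 else 0) := by
    intro a
    have h1 := heq a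
    have h2 := hsum p a
    simp only [hp, hR] at h2 ⊢
    linarith
  -- level-set perturbations
  have hpert : ∀ f : ℝ → ℝ, f 0 = 0 → (R l = 0 → f (p (t l)) = f (p (h l))) →
      ∀ v, f (p v) = 0 := by
    intro f f0 fl
    let e : V → ℝ := fun v => f (p v) / p v
    let g : A → ℝ := fun a => -(f (p (t a)) - f (p (h a))) / R a
    have hpe : ∀ v, p v * e v = f (p v) := by
      intro v
      by_cases h0 : p v = 0
      · simp [h0, f0]
      · simp only [e]; field_simp
    have hRg : ∀ a, R a * g a = -(f (p (t a)) - f (p (h a))) := by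
      intro a
      by_cases h0 : R a = 0
      · have h1 : f (p (t a)) = f (p (h a)) := by
          by_cases hal : a = l
          · subst hal; exact fl h0
          · have := hbal a
            rw [h0, if_neg hal] at this
            congr 1; linarith
        simp [h0, h1]
      · simp only [g]; field_simp
    have h1 := key (e, e, e, e, g, g, g, g, g, g) (by
      intro a
      have h2 := hsum (fun v => (γp w v * e v - γm w v * e v) - (θp w v * e v - θm w v * e v)) a
      have h3 := hpe (t a)
      have h4 := hpe (h a)
      have h5 := hRg a
      simp only [hp, hR] at h3 h4 h5
      change (∑ v, E v a * ((γp w v * e v - γm w v * e v) - (θp w v * e v - θm w v * e v)))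
        + η w a * g a - ρ w a * g a - lam w a * g a + mu w a * g a
        + βp w a * g a - βm w a * g a = 0
      rw [h2]
      linear_combination h3 - h4 + h5)
    intro v
    have c1 : γp w v * e v = 0 := congrFun (congrArg γp h1) v
    have c2 : γm w v * e v = 0 := congrFun (congrArg γm h1) v
    have c3 : θp w v * e v = 0 := congrFun (congrArg θp h1) v
    have c4 : θm w v * e v = 0 := congrFun (congrArg θm h1) v
    rw [← hpe v]
    simp only [hp]
    linear_combination c1 - c2 - c3 + c4
  have hval : (∀ v, p v = 0 ∨ p v = 1 ∨ p v = -1) ∧ (∀ a, R a = 0 ∨ R a = 1 ∨ R a = -1) := by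
    by_cases hl : R l = 0
    · have hb := hbal l
      rw [hl, if_pos rfl] at hb
      have h1 := hpert (fun x => x * (x - p (t l)) * (x - p (h l))) (by ring) (fun _ => by ring)
      have h2 := hpert (fun x => x * (p (t l) + p (h l) - x)) (by ring) (fun _ => by ring) (t l)
      have h3 : p (t l) = 0 ∨ p (h l) = 0 := by
        rcases mul_eq_zero.mp h2 with h | h
        · exact Or.inl h
        · right; linarith
      have hε : ∃ ε : ℝ, (ε = 1 ∨ ε = -1) ∧ ∀ v, p v = 0 ∨ p v = ε := by
        rcases h3 with h3 | h3
        · refine ⟨p (h l), by rcases hs with rfl | rfl; (right; linarith); (left; linarith), ?_⟩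
          intro v
          have := h1 v
          simp only [h3, mul_eq_zero, sub_eq_zero] at this
          tauto
        · refine ⟨p (t l), by rcases hs with rfl | rfl; (left; linarith); (right; linarith), ?_⟩
          intro v
          have := h1 v
          simp only [h3, mul_eq_zero, sub_eq_zero] at this
          tauto
      obtain ⟨ε, hε, hpv⟩ := hε
      constructor
      · intro v
        rcases hpv v with h | h
        · exact Or.inl h
        · exact Or.inr (h ▸ hε)
      · intro a
        by_cases hal : a = l
        · subst hal; exact Or.inl hl
        · have hba := hbal a
          rw [if_neg hal] at hba
          have hRa : R a = p (h a) - p (t a) := by linarith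
          rw [hRa]
          rcases hpv (h a) with x | x <;> rcases hpv (t a) with y | y <;>
            rcases hε with z | z <;> rw [x, y] <;> (try rw [z]) <;> norm_num
    · have h1 := hpert (fun x => x) rfl (fun h => absurd h hl)
      refine ⟨fun v => Or.inl (h1 v), fun a => ?_⟩
      have hba := hbal a
      rw [h1, h1] at hba
      by_cases hal : a = l
      · rw [if_pos hal] at hba
        right
        rcases hs with rfl | rfl
        · left; linarith
        · right; linarith
      · rw [if_neg hal] at hba
        left; linarith
  obtain ⟨hpv, hRv⟩ := hval
  -- local perturbations at a node
  have hnode : ∀ (v : V) (e1 e2 e3 e4 : ℝ),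
      (γp w v * e1 - γm w v * e2) - (θp w v * e3 - θm w v * e4) = 0 →
      γp w v * e1 = 0 ∧ γm w v * e2 = 0 ∧ θp w v * e3 = 0 ∧ θm w v * e4 = 0 := by
    intro v e1 e2 e3 e4 h0
    have h1 := key (Pi.single v e1, Pi.single v e2, Pi.single v e3, Pi.single v e4,
      0, 0, 0, 0, 0, 0) (by
      intro a
      have h2 : ∀ u, E u a * ((γp w u * (Pi.single v e1 : V → ℝ) u
          - γm w u * (Pi.single v e2 : V → ℝ) u)
          - (θp w u * (Pi.single v e3 : V → ℝ) u - θm w u * (Pi.single v e4 : V → ℝ) u)) = 0 := by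
        intro u
        by_cases huv : u = v
        · subst huv; simp [h0]
        · simp [huv]
      have h3 := Finset.sum_eq_zero (s := Finset.univ) (fun u _ => h2 u)
      simpa [γp, γm, θp, θm, lam, mu, η, ρ, βp, βm] using h3)
    have c1 := congrFun (congrArg γp h1) v
    have c2 := congrFun (congrArg γm h1) v
    have c3 := congrFun (congrArg θp h1) v
    have c4 := congrFun (congrArg θm h1) v
    simp [γp, γm, θp, θm] at c1 c2 c3 c4 ⊢
    exact ⟨c1, c2, c3, c4⟩
  -- local perturbations at an arc
  have harc : ∀ (a : A) (e1 e2 e3 e4 e5 e6 : ℝ),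
      η w a * e3 - ρ w a * e4 - lam w a * e1 + mu w a * e2 + βp w a * e5 - βm w a * e6 = 0 →
      lam w a * e1 = 0 ∧ mu w a * e2 = 0 ∧ η w a * e3 = 0 ∧ ρ w a * e4 = 0 ∧
      βp w a * e5 = 0 ∧ βm w a * e6 = 0 := by
    intro a e1 e2 e3 e4 e5 e6 h0
    have h1 := key (0, 0, 0, 0, Pi.single a e1, Pi.single a e2, Pi.single a e3, Pi.single a e4,
      Pi.single a e5, Pi.single a e6) (by
      intro b
      by_cases hb : b = a
      · subst hb
        simpa [γp, γm, θp, θm, lam, mu, η, ρ, βp, βm] using h0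
      · simp [γp, γm, θp, θm, lam, mu, η, ρ, βp, βm, hb])
    have c1 := congrFun (congrArg lam h1) a
    have c2 := congrFun (congrArg mu h1) a
    have c3 := congrFun (congrArg η h1) a
    have c4 := congrFun (congrArg ρ h1) a
    have c5 := congrFun (congrArg βp h1) a
    have c6 := congrFun (congrArg βm h1) a
    simp [lam, mu, η, ρ, βp, βm] at c1 c2 c3 c4 c5 c6 ⊢
    exact ⟨c1, c2, c3, c4, c5, c6⟩
  have HV : ∀ v, (γp w v = 0 ∨ γp w v = 1) ∧ (γm w v = 0 ∨ γm w v = 1) ∧ (θp w v = 0 ∨ θp w v = 1) ∧ (θm w v = 0 ∨ θm w v = 1) := by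
    intro v
    have n01 := (hnode v (γm w v) (γp w v) 0 0 (by ring)).1
    have n02 := (hnode v (θp w v) 0 (γp w v) 0 (by ring)).1
    have n03 := (hnode v (θm w v) 0 0 (-γp w v) (by ring)).1
    have n12 := (hnode v 0 (θp w v) (-γm w v) 0 (by ring)).2.1
    have n13 := (hnode v 0 (θm w v) 0 (γm w v) (by ring)).2.1
    have n23 := (hnode v 0 0 (θm w v) (θp w v) (by ring)).2.2.1
    have hP := hpv v
    simp only [hp] at hP
    refine ⟨?_, ?_, ?_, ?_⟩
    · exact zero_one_of_sq (p1 v) hP (Or.inl (by linear_combination n01 + n02 - n03))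
    · exact zero_one_of_sq (p2 v) hP (Or.inr (by linear_combination n01 - n12 + n13))
    · exact zero_one_of_sq (p3 v) hP (Or.inr (by linear_combination n02 - n12 + n23))
    · exact zero_one_of_sq (p4 v) hP (Or.inl (by linear_combination - n03 + n13 + n23))
  have HA : ∀ a, (lam w a = 0 ∨ lam w a = 1) ∧ (mu w a = 0 ∨ mu w a = 1) ∧ (η w a = 0 ∨ η w a = 1) ∧ (ρ w a = 0 ∨ ρ w a = 1) ∧ (βp w a = 0 ∨ βp w a = 1) ∧ (βm w a = 0 ∨ βm w a = 1) := by
    intro a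
    have n01 := (harc a (mu w a) (lam w a) 0 0 0 0 (by ring)).1
    have n02 := (harc a (η w a) 0 (lam w a) 0 0 0 (by ring)).1
    have n03 := (harc a (ρ w a) 0 0 (-lam w a) 0 0 (by ring)).1
    have n04 := (harc a (βp w a) 0 0 0 (lam w a) 0 (by ring)).1
    have n05 := (harc a (βm w a) 0 0 0 0 (-lam w a) (by ring)).1
    have n12 := (harc a 0 (η w a) (-mu w a) 0 0 0 (by ring)).2.1
    have n13 := (harc a 0 (ρ w a) 0 (mu w a) 0 0 (by ring)).2.1
    have n14 := (harc a 0 (βp w a) 0 0 (-mu w a) 0 (by ring)).2.1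
    have n15 := (harc a 0 (βm w a) 0 0 0 (mu w a) (by ring)).2.1
    have n23 := (harc a 0 0 (ρ w a) (η w a) 0 0 (by ring)).2.2.1
    have n24 := (harc a 0 0 (βp w a) 0 (-η w a) 0 (by ring)).2.2.1
    have n25 := (harc a 0 0 (βm w a) 0 0 (η w a) (by ring)).2.2.1
    have n34 := (harc a 0 0 0 (βp w a) (ρ w a) 0 (by ring)).2.2.2.1
    have n35 := (harc a 0 0 0 (βm w a) 0 (-ρ w a) (by ring)).2.2.2.1
    have n45 := (harc a 0 0 0 0 (βm w a) (βp w a) (by ring)).2.2.2.2.1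
    have hP := hRv a
    simp only [hR] at hP
    refine ⟨?_, ?_, ?_, ?_, ?_, ?_⟩
    · exact zero_one_of_sq (q1 a) hP (Or.inr (by linear_combination n01 + n02 - n03 + n04 - n05))
    · exact zero_one_of_sq (q2 a) hP (Or.inl (by linear_combination n01 - n12 + n13 - n14 + n15))
    · exact zero_one_of_sq (q3 a) hP (Or.inl (by linear_combination n02 - n12 + n23 - n24 + n25))
    · exact zero_one_of_sq (q4 a) hP (Or.inr (by linear_combination - n03 + n13 + n23 + n34 - n35))
    · exact zero_one_of_sq (q5 a) hP (Or.inl (by linear_combination n04 - n14 - n24 + n34 + n45))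
    · exact zero_one_of_sq (q6 a) hP (Or.inr (by linear_combination - n05 + n15 + n25 - n35 + n45))
  exact ⟨fun v => (HV v).1, fun v => (HV v).2.1, fun v => (HV v).2.2.1, fun v => (HV v).2.2.2,
    fun a => (HA a).1, fun a => (HA a).2.1, fun a => (HA a).2.2.1, fun a => (HA a).2.2.2.1,
    fun a => (HA a).2.2.2.2.1, fun a => (HA a).2.2.2.2.2⟩
end

section
/- Let M be a totally unimodular real matrix with finitely many rows and columns, let l be a fixed row index, and let s ∈ {1,−1}. Then every extreme point of the polyhedron P = {x : x ≥ 0 and M·x = s·e_l}, where e_l is the l-th standard unit vector, has all of its coordinates in {0,1}. -/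
open Filter Topology in
lemma aux_ker_zero
    {R C : Type} [Fintype R] [Fintype C]
    (M : Matrix R C ℝ) (b : R → ℝ) (x : C → ℝ)
    (hx : x ∈ Set.extremePoints ℝ {x' : C → ℝ | (∀ c, 0 ≤ x' c) ∧ M.mulVec x' = b})
    (d : C → ℝ) (hd : ∀ c, x c = 0 → d c = 0) (hMd : M.mulVec d = 0) : d = 0 := by
  rw [mem_extremePoints_iff_left] at hx
  obtain ⟨⟨hx0, hxb⟩, hext⟩ := hx
  have hev : ∀ᶠ e : ℝ in 𝓝[>] 0, ∀ c, e * |d c| ≤ x c := by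
    rw [eventually_all]
    intro c
    by_cases hc : x c = 0
    · simp [hc, hd c hc]
    · have hpos : 0 < x c := lt_of_le_of_ne (hx0 c) (Ne.symm hc)
      have ht : Tendsto (fun e : ℝ => e * |d c|) (𝓝[>] 0) (𝓝 0) := by
        have : Continuous (fun e : ℝ => e * |d c|) := by fun_prop
        have h2 := this.tendsto 0
        simp only [zero_mul] at h2
        exact h2.mono_left nhdsWithin_le_nhds
      exact (ht.eventually_lt_const hpos).mono fun e he => he.le
  obtain ⟨e, he, hepos⟩ := (hev.and self_mem_nhdsWithin).exists
  have hepos : 0 < e := hepos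
  have habs : ∀ c, |e * d c| ≤ x c := fun c => by
    rw [abs_mul, abs_of_pos hepos]; exact he c
  have h1 := hext (x + e • d) ⟨fun c => by
      have := neg_le_of_abs_le (habs c)
      simp only [Pi.add_apply, Pi.smul_apply, smul_eq_mul]; linarith, by
      rw [Matrix.mulVec_add, Matrix.mulVec_smul, hMd, hxb]; simp⟩
    (x - e • d) ⟨fun c => by
      have := le_of_abs_le (habs c)
      simp only [Pi.sub_apply, Pi.smul_apply, smul_eq_mul]; linarith, by
      rw [Matrix.mulVec_sub, Matrix.mulVec_smul, hMd, hxb]; simp⟩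
    ⟨1/2, 1/2, by norm_num, by norm_num, by norm_num, by
      ext c; simp; ring⟩
  have h2 : e • d = 0 := by simpa using h1
  exact (smul_eq_zero.mp h2).resolve_left hepos.ne'

lemma aux_rows {R S : Type} [Fintype R] [Fintype S] [DecidableEq S]
    (A : Matrix R S ℝ) (hA : ∀ v, A.mulVec v = 0 → v = 0) :
    ∃ f : S → R, (A.submatrix f id).det ≠ 0 := by
  have hinj : Function.Injective A.mulVec := by
    intro v w h
    have := hA (v - w) (by rw [Matrix.mulVec_sub, sub_eq_zero]; exact h)
    exact sub_eq_zero.mp this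
  have hrank : Module.finrank ℝ (Submodule.span ℝ (Set.range A.row)) = Fintype.card S := by
    rw [← Matrix.rank_eq_finrank_span_row, ← Matrix.rank_transpose]
    apply LinearIndependent.rank_matrix
    rw [Matrix.row_transpose]
    exact Matrix.mulVec_injective_iff.mp hinj
  obtain ⟨g, hg, -, hli⟩ := Submodule.exists_fun_fin_finrank_span_eq ℝ (Set.range A.row)
  choose k hk using hg
  let e : S ≃ Fin (Module.finrank ℝ (Submodule.span ℝ (Set.range A.row))) :=
    Fintype.equivOfCardEq (by rw [Fintype.card_fin, hrank])
  refine ⟨fun i => k (e i), ?_⟩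
  have hrow : (A.submatrix (fun i => k (e i)) id).row = g ∘ e := by
    ext i j
    exact congrFun (hk (e i)) j
  have hu : IsUnit (A.submatrix (fun i => k (e i)) id) := by
    rw [← Matrix.linearIndependent_rows_iff_isUnit, hrow]
    exact hli.comp _ e.injective
  exact ((Matrix.isUnit_iff_isUnit_det _).mp hu).ne_zero

/-- Let `M` be a totally unimodular real matrix with finitely many rows and columns,
`l` a fixed row index and `s ∈ {1, -1}`.  Then every extreme point of the polyhedron
`P = {x : x ≥ 0, M·x = s·e_l}` has all of its coordinates in `{0, 1}`. -/
theorem extremePoint_of_TU_zero_one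
    {R C : Type} [Fintype R] [Fintype C] [DecidableEq R]
    (M : Matrix R C ℝ) (hM : M.IsTotallyUnimodular)
    (l : R) (s : ℝ) (hs : s = 1 ∨ s = -1)
    (x : C → ℝ)
    (hx : x ∈ Set.extremePoints ℝ
      {x' : C → ℝ | (∀ c, 0 ≤ x' c) ∧
        M.mulVec x' = fun r => s * (if r = l then 1 else 0)}) :
    ∀ c, x c = 0 ∨ x c = 1 := by
  classical
  have hker := aux_ker_zero M _ x hx
  obtain ⟨hx0, hxb⟩ := hx.1
  intro c
  by_cases hc : x c = 0
  · exact Or.inl hc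
  right
  let S := {c : C // x c ≠ 0}
  let A : Matrix R S ℝ := M.submatrix id Subtype.val
  have hsum : ∀ d : C → ℝ, (∀ c, x c = 0 → d c = 0) →
      A.mulVec (fun i => d i.1) = M.mulVec d := by
    intro d hd
    ext r
    have h1 := Finset.sum_subtype (p := fun c => x c ≠ 0) (F := inferInstance)
      (Finset.univ.filter fun c => x c ≠ 0) (by simp) (fun c => M r c * d c)
    refine h1.symm.trans (Finset.sum_subset (Finset.subset_univ _) ?_)
    intro c _ hc
    simp only [Finset.mem_filter, Finset.mem_univ, true_and, not_not] at hc
    rw [hd c hc, mul_zero]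
  obtain ⟨f, hf⟩ := aux_rows A (by
    intro v hv
    let d : C → ℝ := fun c => if h : x c ≠ 0 then v ⟨c, h⟩ else 0
    have hd : ∀ c, x c = 0 → d c = 0 := fun c h => by simp [d, h]
    have hdv : (fun i : S => d i.1) = v := by
      ext i
      exact dif_pos i.2
    have h0 : d = 0 := hker d hd (by rw [← hsum d hd, hdv, hv])
    rw [← hdv, h0]; rfl)
  set B := A.submatrix f id with hB
  let y : S → ℝ := fun i => x i.1
  have hBy : B.mulVec y = s • fun i => (1 : Matrix R R ℝ) (f i) l := by
    have h1 := hsum x (fun _ h => h)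
    ext i
    have h2 := congrFun (h1.trans hxb) (f i)
    refine Eq.trans (show B.mulVec y i = _ from h2) ?_
    simp [Matrix.one_apply]
  have hcr : B.det • y = B.cramer (B.mulVec y) := by
    rw [Matrix.cramer_eq_adjugate_mulVec, Matrix.mulVec_mulVec, Matrix.adjugate_mul,
      Matrix.smul_mulVec, Matrix.one_mulVec]
  have hTU := (Matrix.isTotallyUnimodular_iff_fintype _).mp
    ((Matrix.fromCols_one_isTotallyUnimodular_iff M).mpr hM)
  have hdetB := hTU S f (fun j => Sum.inl j.1)
  have hdetC := hTU S f (fun j => if j = ⟨c, hc⟩ then Sum.inr l else Sum.inl j.1)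
  have e1 : (Matrix.fromCols M (1 : Matrix R R ℝ)).submatrix f (fun j : S => Sum.inl j.1) = B := by
    ext i j; simp [B, A]
  have e2 : (Matrix.fromCols M (1 : Matrix R R ℝ)).submatrix f
      (fun j : S => if j = ⟨c, hc⟩ then Sum.inr l else Sum.inl j.1)
      = B.updateCol ⟨c, hc⟩ (fun i => (1 : Matrix R R ℝ) (f i) l) := by
    ext i j
    by_cases hj : j = ⟨c, hc⟩
    · simp [hj]
    · simp [hj, B, A]
  rw [e1] at hdetB
  rw [e2] at hdetC
  have hcc := congrFun hcr ⟨c, hc⟩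
  rw [hBy, Matrix.cramer_apply, Matrix.det_updateCol_smul] at hcc
  simp only [Pi.smul_apply, smul_eq_mul, y] at hcc
  have hpos : 0 < x c := lt_of_le_of_ne (hx0 c) (Ne.symm hc)
  generalize (B.updateCol ⟨c, hc⟩ (fun i => (1 : Matrix R R ℝ) (f i) l)).det = q at hcc hdetC
  generalize B.det = p at *
  obtain ⟨a, rfl⟩ := hdetB
  obtain ⟨b, rfl⟩ := hdetC
  rcases hs with rfl | rfl <;> cases a <;> cases b <;> simp at hcc hf <;> linarith
end

section
/- At every extreme point π̄ of C^l (the m = 1 cone over a network polytope), for each node v ∈ V at most one of the four components γ⁺(v), γ⁻(v), θ⁺(v), θ⁻(v) is positive; that is, a node's positive and negative flow-balance inequalities cannot both receive positive aggregation weight, nor can the same flow-balance inequality receive positive weight both with multiplier y₁ and with multiplier 1 − y₁. -/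
open ECRWeights in
/-- Perturbing the four node weights at `v` along a direction with zero signed sum stays in
`C^l`, as long as nonnegativity is preserved. -/
lemma memCl_perturb {V A : Type} [Fintype V] [DecidableEq V] [DecidableEq A]
    (E : V → A → ℝ) (l : A) (s : ℝ) (w : ECRWeights V A) (hw : memCl E l s w)
    (v : V) (p q r u : ℝ) (hz : (p - q) - (r - u) = 0)
    (hp : 0 ≤ γp w v + p) (hq : 0 ≤ γm w v + q) (hr : 0 ≤ θp w v + r) (hu : 0 ≤ θm w v + u) :
    memCl E l s (w + (Pi.single v p, Pi.single v q, Pi.single v r, Pi.single v u,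
      0, 0, 0, 0, 0, 0)) := by
  obtain ⟨g1, g2, g3, g4, a1, a2, a3, a4, a5, a6⟩ := w
  obtain ⟨h1, h2, h3, h4, h5, h6, h7, h8, h9, h10, h11, h12, h13⟩ := hw
  simp only [γp, γm, θp, θm, lam, mu, η, ρ, βp, βm] at *
  have key : ∀ (g : V → ℝ) (x : ℝ), (∀ y, 0 ≤ g y) → 0 ≤ g v + x →
      ∀ y, 0 ≤ g y + (Pi.single v x : V → ℝ) y := by
    intro g x hg hx y
    by_cases hy : y = v
    · subst hy; simpa using hx
    · simpa [hy] using hg y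
  have hsum : ∀ y, (g1 y + (Pi.single v p : V → ℝ) y - (g2 y + (Pi.single v q : V → ℝ) y))
      - (g3 y + (Pi.single v r : V → ℝ) y - (g4 y + (Pi.single v u : V → ℝ) y))
      = (g1 y - g2 y) - (g3 y - g4 y) := by
    intro y
    by_cases hy : y = v
    · subst hy; simp only [Pi.single_eq_same]; linarith
    · simp [hy]
  simp only [memCl, γp, γm, θp, θm, lam, mu, η, ρ, βp, βm, Prod.mk_add_mk, Pi.add_apply,
    add_zero]
  refine ⟨key _ _ h1 hp, key _ _ h2 hq, key _ _ h3 hr, key _ _ h4 hu, h5, h6, h7, h8, h9, h10,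
    h11, h12, ?_⟩
  intro a
  simp only [hsum]
  exact h13 a

open ECRWeights in
/-- At an extreme point, no nonzero two-sided perturbation of the node weights at `v` exists. -/
lemma extreme_perturb_zero {V A : Type} [Fintype V] [DecidableEq V] [DecidableEq A]
    (E : V → A → ℝ) (l : A) (s : ℝ) (w : ECRWeights V A)
    (hw : w ∈ Set.extremePoints ℝ {w' : ECRWeights V A | memCl E l s w'})
    (v : V) (p q r u : ℝ) (hz : (p - q) - (r - u) = 0)
    (hp : |p| ≤ γp w v) (hq : |q| ≤ γm w v) (hr : |r| ≤ θp w v) (hu : |u| ≤ θm w v) :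
    p = 0 ∧ q = 0 ∧ r = 0 ∧ u = 0 := by
  rw [abs_le] at hp hq hr hu
  have m1 := memCl_perturb E l s w hw.1 v p q r u hz (by linarith) (by linarith) (by linarith)
    (by linarith)
  have m2 := memCl_perturb E l s w hw.1 v (-p) (-q) (-r) (-u) (by linarith) (by linarith)
    (by linarith) (by linarith) (by linarith)
  have hneg : ((Pi.single v (-p), Pi.single v (-q), Pi.single v (-r), Pi.single v (-u),
      0, 0, 0, 0, 0, 0) : ECRWeights V A) = -(Pi.single v p, Pi.single v q, Pi.single v r,
      Pi.single v u, 0, 0, 0, 0, 0, 0) := by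
    simp [Pi.single_neg]
  rw [hneg] at m2
  have hx := hw.2 m1 m2 ⟨1 / 2, 1 / 2, by norm_num, by norm_num, by norm_num, by module⟩
  have hd := add_eq_left.mp hx
  simpa [Prod.ext_iff] using hd

open ECRWeights in
/-- At every extreme point of `C^l` (the `m = 1` cone over a network polytope), for each node
`v` at most one of `γ⁺ v`, `γ⁻ v`, `θ⁺ v`, `θ⁻ v` is positive: a node's positive and negative
flow-balance inequalities cannot both receive positive aggregation weight, nor can the same
flow-balance inequality receive positive weight both with multiplier `y₁` and with
multiplier `1 - y₁`. -/
theorem extremePoint_mem_Cl_at_most_one_flow_balance_weight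
    {V A : Type} [Fintype V] [Fintype A] [DecidableEq V] [DecidableEq A]
    (t h : A → V) (hloop : ∀ a, t a ≠ h a)
    (E : V → A → ℝ)
    (hE : ∀ v a, E v a = (if t a = v then (1 : ℝ) else 0) - (if h a = v then 1 else 0))
    (l : A) (s : ℝ) (hs : s = 1 ∨ s = -1)
    (w : ECRWeights V A)
    (hw : w ∈ Set.extremePoints ℝ {w' : ECRWeights V A | memCl E l s w'}) :
    ∀ v, ¬(0 < γp w v ∧ 0 < γm w v) ∧ ¬(0 < γp w v ∧ 0 < θp w v) ∧
      ¬(0 < γp w v ∧ 0 < θm w v) ∧ ¬(0 < γm w v ∧ 0 < θp w v) ∧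
      ¬(0 < γm w v ∧ 0 < θm w v) ∧ ¬(0 < θp w v ∧ 0 < θm w v) := by
  intro v
  obtain ⟨h1, h2, h3, h4, -⟩ := hw.1
  have H := extreme_perturb_zero E l s w hw v
  have n1 := h1 v
  have n2 := h2 v
  have n3 := h3 v
  have n4 := h4 v
  have M : ∀ x y : ℝ, 0 < x → 0 < y → ∃ e, 0 < e ∧ |e| ≤ x ∧ |e| ≤ y := by
    intro x y hx hy
    have hm := lt_min hx hy
    exact ⟨min x y, hm, by rw [abs_of_pos hm]; exact min_le_left _ _,
      by rw [abs_of_pos hm]; exact min_le_right _ _⟩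
  refine ⟨?_, ?_, ?_, ?_, ?_, ?_⟩ <;> rintro ⟨hx, hy⟩ <;>
    obtain ⟨e, he, hex, hey⟩ := M _ _ hx hy
  · exact he.ne' (H e e 0 0 (by ring) hex hey (by simpa) (by simpa)).1
  · exact he.ne' (H e 0 e 0 (by ring) hex (by simpa) hey (by simpa)).1
  · exact he.ne' (H e 0 0 (-e) (by ring) hex (by simpa) (by simpa) (by simpa using hey)).1
  · exact he.ne' (H 0 e (-e) 0 (by ring) (by simpa) hex (by simpa using hey) (by simpa)).2.1
  · exact he.ne' (H 0 e 0 e (by ring) (by simpa) hex (by simpa) hey).2.1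
  · exact he.ne' (H 0 0 e e (by ring) (by simpa) (by simpa) hex hey).2.2.1
end

section
/- Let π̄ be an extreme point of C^l (the m = 1 cone over a network polytope) and let Ĩ = {v ∈ V : γ⁺(v) > 0 or γ⁻(v) > 0 or θ⁺(v) > 0 or θ⁻(v) > 0} be the set of nodes whose flow-balance constraints carry positive aggregation weight. If Ĩ ≠ ∅, then Ĩ induces a connected subgraph of the underlying undirected graph of G (i.e., Ĩ is the node set of a tree of the undirected version of G), and the arc l is incident to at least one node of Ĩ. -/
open ECRWeights in
/-- Scale node weights by `k` and arc weights by `m`. -/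
def scaleW {V A : Type} (k : V → ℝ) (m : A → ℝ) (w : ECRWeights V A) : ECRWeights V A :=
  (fun v => k v * γp w v, fun v => k v * γm w v, fun v => k v * θp w v, fun v => k v * θm w v,
   fun a => m a * lam w a, fun a => m a * mu w a, fun a => m a * η w a, fun a => m a * ρ w a,
   fun a => m a * βp w a, fun a => m a * βm w a)

open ECRWeights in
theorem scaleW_mem {V A : Type} [Fintype V] [DecidableEq A]
    (E : V → A → ℝ) (l : A) (s : ℝ) (w : ECRWeights V A) (hw : memCl E l s w)
    (k : V → ℝ) (m : A → ℝ) (hk : ∀ v, 0 ≤ k v) (hm : ∀ a, 0 ≤ m a) (hml : m l = 1)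
    (hkm : ∀ v a, E v a ≠ 0 → (γp w v - γm w v) - (θp w v - θm w v) ≠ 0 → k v = m a) :
    memCl E l s (scaleW k m w) := by
  obtain ⟨h1, h2, h3, h4, h5, h6, h7, h8, h9, h10, h11, h12, h13⟩ := hw
  refine ⟨fun v => mul_nonneg (hk v) (h1 v), fun v => mul_nonneg (hk v) (h2 v),
    fun v => mul_nonneg (hk v) (h3 v), fun v => mul_nonneg (hk v) (h4 v),
    fun v => mul_nonneg (hm v) (h5 v), fun v => mul_nonneg (hm v) (h6 v),
    fun v => mul_nonneg (hm v) (h7 v), fun v => mul_nonneg (hm v) (h8 v),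
    fun v => mul_nonneg (hm v) (h9 v), fun v => mul_nonneg (hm v) (h10 v), ?_, ?_, ?_⟩
  · change m l * βp w l = 0
    rw [h11, mul_zero]
  · change m l * βm w l = 0
    rw [h12, mul_zero]
  · intro a
    change (∑ v, E v a * ((k v * γp w v - k v * γm w v) - (k v * θp w v - k v * θm w v)))
      + m a * η w a - m a * ρ w a - m a * lam w a + m a * mu w a + m a * βp w a - m a * βm w a
      = s * (if a = l then 1 else 0)
    have hsum : (∑ v, E v a * ((k v * γp w v - k v * γm w v) - (k v * θp w v - k v * θm w v)))
        = m a * ∑ v, E v a * ((γp w v - γm w v) - (θp w v - θm w v)) := by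
      rw [Finset.mul_sum]
      refine Finset.sum_congr rfl fun v _ => ?_
      by_cases hE : E v a = 0
      · simp [hE]
      by_cases hx : (γp w v - γm w v) - (θp w v - θm w v) = 0
      · rw [hx]
        linear_combination E v a * k v * hx
      · rw [hkm v a hE hx]; ring
    have hr : m a * (s * (if a = l then 1 else 0)) = s * (if a = l then 1 else 0) := by
      by_cases hal : a = l
      · rw [hal, hml, one_mul]
      · simp [hal]
    rw [hsum]
    linear_combination m a * h13 a + hr

open ECRWeights in
/-- A nonempty part of the support closed under adjacency inside the support meets `l`. -/
theorem closed_part_meets {V A : Type} [Fintype V] [DecidableEq V] [DecidableEq A]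
    (t h : A → V) (E : V → A → ℝ)
    (hE : ∀ v a, E v a = (if t a = v then (1 : ℝ) else 0) - (if h a = v then 1 else 0))
    (l : A) (s : ℝ) (w : ECRWeights V A)
    (hw : w ∈ Set.extremePoints ℝ {w' : ECRWeights V A | memCl E l s w'})
    (I : Set V)
    (hI : I = {v | 0 < γp w v ∨ 0 < γm w v ∨ 0 < θp w v ∨ 0 < θm w v})
    (K : Set V) (hKI : K ⊆ I) (u : V) (hu : u ∈ K)
    (hK : ∀ x ∈ K, ∀ y ∈ I, x ≠ y →
      (∃ a, (t a = x ∨ h a = x) ∧ (t a = y ∨ h a = y)) → y ∈ K) :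
    t l ∈ K ∨ h l ∈ K := by
  classical
  by_contra hl
  rw [mem_extremePoints] at hw
  obtain ⟨hmem, hext⟩ := hw
  have hmem' : memCl E l s w := hmem
  obtain ⟨h1, h2, h3, h4, -⟩ := id hmem'
  let k : ℝ → V → ℝ := fun c v => if v ∈ K then c else 1
  let m : ℝ → A → ℝ := fun c a => if t a ∈ K ∨ h a ∈ K then c else 1
  have key : ∀ c : ℝ, 0 ≤ c → memCl E l s (scaleW (k c) (m c) w) := by
    intro c hc
    refine scaleW_mem E l s w hmem' _ _ ?_ ?_ ?_ ?_
    · intro v; simp only [k]; split_ifs <;> linarith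
    · intro v; simp only [m]; split_ifs <;> linarith
    · simp only [m]; rw [if_neg hl]
    · intro v a hEv hx
      have hvI : v ∈ I := by
        rw [hI]
        by_contra hv
        simp only [Set.mem_setOf_eq, not_or, not_lt] at hv
        apply hx
        linarith [h1 v, h2 v, h3 v, h4 v, hv.1, hv.2.1, hv.2.2.1, hv.2.2.2,
          le_antisymm hv.1 (h1 v), le_antisymm hv.2.1 (h2 v),
          le_antisymm hv.2.2.1 (h3 v), le_antisymm hv.2.2.2 (h4 v)]
      have hva : t a = v ∨ h a = v := by
        by_contra hn
        rw [not_or] at hn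
        apply hEv
        rw [hE, if_neg hn.1, if_neg hn.2, sub_zero]
      have hiff : v ∈ K ↔ (t a ∈ K ∨ h a ∈ K) := by
        constructor
        · intro hv
          rcases hva with e | e
          · left; rwa [e]
          · right; rwa [e]
        · intro hv
          by_contra hvK
          rcases hv with hv | hv
          · exact hvK (hK _ hv v hvI (fun e => hvK (e ▸ hv)) ⟨a, Or.inl rfl, hva⟩)
          · exact hvK (hK _ hv v hvI (fun e => hvK (e ▸ hv)) ⟨a, Or.inr rfl, hva⟩)
      simp only [k, m, hiff]
  have hk2 : ∀ v, (1/2 : ℝ) * k 0 v + (1/2) * k 2 v = 1 := by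
    intro v; simp only [k]; split_ifs <;> norm_num
  have hm2 : ∀ a, (1/2 : ℝ) * m 0 a + (1/2) * m 2 a = 1 := by
    intro v; simp only [m]; split_ifs <;> norm_num
  have hseg : w ∈ openSegment ℝ (scaleW (k 0) (m 0) w) (scaleW (k 2) (m 2) w) := by
    refine ⟨1/2, 1/2, by norm_num, by norm_num, by norm_num, ?_⟩
    have e1 : ∀ f : V → ℝ, (1/2 : ℝ) • (fun v => k 0 v * f v) + (1/2 : ℝ) • (fun v => k 2 v * f v)
        = f := by
      intro f; funext v
      simp only [Pi.add_apply, Pi.smul_apply, smul_eq_mul]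
      linear_combination f v * hk2 v
    have e2 : ∀ f : A → ℝ, (1/2 : ℝ) • (fun v => m 0 v * f v) + (1/2 : ℝ) • (fun v => m 2 v * f v)
        = f := by
      intro f; funext v
      simp only [Pi.add_apply, Pi.smul_apply, smul_eq_mul]
      linear_combination f v * hm2 v
    simp only [scaleW, Prod.smul_mk, Prod.mk_add_mk, e1, e2]
    rfl
  have heq := (hext _ (key 0 le_rfl) _ (key 2 (by norm_num)) hseg).1
  have hk0 : k 0 u = 0 := by simp only [k]; rw [if_pos hu]
  have g1 : k 0 u * γp w u = γp w u := congrFun (congrArg γp heq) u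
  have g2 : k 0 u * γm w u = γm w u := congrFun (congrArg γm heq) u
  have g3 : k 0 u * θp w u = θp w u := congrFun (congrArg θp heq) u
  have g4 : k 0 u * θm w u = θm w u := congrFun (congrArg θm heq) u
  rw [hk0, zero_mul] at g1 g2 g3 g4
  have huI := hKI hu
  rw [hI] at huI
  rcases huI with q | q | q | q <;> linarith

open ECRWeights in
/-- At an extreme point of `C^l` (the `m = 1` cone over a network polytope), the set `Ĩ` of
nodes whose flow-balance constraints carry positive aggregation weight, if nonempty, induces
a connected subgraph of the underlying undirected graph of `G` (i.e. it is the node set of a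
tree of the undirected version of `G`), and the arc `l` is incident to at least one node
of `Ĩ`. -/
theorem extremePoint_mem_Cl_support_is_tree
    {V A : Type} [Fintype V] [Fintype A] [DecidableEq V] [DecidableEq A]
    (t h : A → V) (hloop : ∀ a, t a ≠ h a)
    (E : V → A → ℝ)
    (hE : ∀ v a, E v a = (if t a = v then (1 : ℝ) else 0) - (if h a = v then 1 else 0))
    (l : A) (s : ℝ) (hs : s = 1 ∨ s = -1)
    (w : ECRWeights V A)
    (hw : w ∈ Set.extremePoints ℝ {w' : ECRWeights V A | memCl E l s w'})
    (I : Set V)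
    (hI : I = {v | 0 < γp w v ∨ 0 < γm w v ∨ 0 < θp w v ∨ 0 < θm w v})
    (hne : I.Nonempty) :
    (∀ u ∈ I, ∀ v ∈ I, Relation.ReflTransGen
      (fun x y => x ∈ I ∧ y ∈ I ∧ x ≠ y ∧
        ∃ a, (t a = x ∨ h a = x) ∧ (t a = y ∨ h a = y)) u v) ∧
    (t l ∈ I ∨ h l ∈ I) := by
  have hmeet := closed_part_meets t h E hE l s w hw I hI
  set R : V → V → Prop := fun x y => x ∈ I ∧ y ∈ I ∧ x ≠ y ∧
        ∃ a, (t a = x ∨ h a = x) ∧ (t a = y ∨ h a = y) with hR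
  have hsymm : ∀ x y, R x y → R y x := by
    rintro x y ⟨hx, hy, hxy, a, ha, hb⟩
    exact ⟨hy, hx, hxy.symm, a, hb, ha⟩
  have hsymm' : ∀ x y, Relation.ReflTransGen R x y → Relation.ReflTransGen R y x := by
    intro x y hxy
    induction hxy with
    | refl => exact .refl
    | tail _ hbc ih => exact .head (hsymm _ _ hbc) ih
  have hreach : ∀ u ∈ I, (t l ∈ I ∧ Relation.ReflTransGen R u (t l)) ∨
      (h l ∈ I ∧ Relation.ReflTransGen R u (h l)) := by
    intro u hu
    exact hmeet {x | x ∈ I ∧ Relation.ReflTransGen R u x} (fun x hx => hx.1) u ⟨hu, .refl⟩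
      (fun x hx y hy hxy ha => ⟨hy, hx.2.tail ⟨hx.1, hy, hxy, ha⟩⟩)
  refine ⟨?_, ?_⟩
  · intro u hu v hv
    rcases hreach u hu with ⟨a1, b1⟩ | ⟨a1, b1⟩ <;> rcases hreach v hv with ⟨a2, b2⟩ | ⟨a2, b2⟩
    · exact b1.trans (hsymm' _ _ b2)
    · exact (b1.tail ⟨a1, a2, hloop l, l, Or.inl rfl, Or.inr rfl⟩).trans (hsymm' _ _ b2)
    · exact (b1.tail ⟨a1, a2, (hloop l).symm, l, Or.inr rfl, Or.inl rfl⟩).trans (hsymm' _ _ b2)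
    · exact b1.trans (hsymm' _ _ b2)
  · obtain ⟨u, hu⟩ := hne
    rcases hreach u hu with q | q
    · exact Or.inl q.1
    · exact Or.inr q.1
end

section
/- Let Ĩ ⊆ V be nonempty and induce a connected subgraph of the underlying undirected graph of G, and let l ∈ A be an arc exactly one of whose endpoints lies in Ĩ. Put ε = 1 if h(l) ∈ Ĩ and ε = −1 if t(l) ∈ Ĩ, and define c : A → ℝ by c(a) = (1 if a = l else 0) + ε·Σ_{v ∈ Ĩ} E(v,a). Then: (C1) the number of arcs a ∈ A such that c(a) = 0 and either a = l or a is incident to a node of Ĩ is at least |Ĩ|; and (C2) c(l) = 0 and every node v ∈ Ĩ is incident to at least one arc a with c(a) = 0. (Here c(a) is the net coefficient of the bilinear term y₁·x_a when the flow-balance constraints of the nodes of Ĩ, each with aggregation weight 1 and multiplier y₁ or 1 − y₁ according to any partition of Ĩ, are aggregated with the base bilinear equality for arc l; (C1) and (C2) are exactly the EC&R cancellation conditions, so any such tree, partition and class sign yields an EC&R assignment.) -/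
theorem ecr_exists_leaving {V : Type} {r : V → V → Prop} {u v : V} (S : Finset V)
    (huv : Relation.ReflTransGen r u v) (hu : u ∈ S) (hv : v ∉ S) :
    ∃ x ∈ S, ∃ y, y ∉ S ∧ r x y := by
  induction huv with
  | refl => exact absurd hu hv
  | @tail b d _ hbd ih =>
    by_cases hb : b ∈ S
    · exact ⟨b, hb, d, hv, hbd⟩
    · exact ih hb

/-- Let `Ĩ ⊆ V` be nonempty and induce a connected subgraph of the underlying undirected
graph of `G`, and let `l` be an arc exactly one of whose endpoints lies in `Ĩ`.  With
`ε = 1` if `h l ∈ Ĩ` and `ε = -1` if `t l ∈ Ĩ`, and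
`c a = [a = l] + ε·Σ_{v ∈ Ĩ} E (v, a)` the net coefficient of the bilinear term `y₁·x_a` in
the EC&R aggregation, we have:
(C1) the number of arcs `a` with `c a = 0` that are equal to `l` or incident to a node of `Ĩ`
is at least `|Ĩ|`; and
(C2) `c l = 0` and every node of `Ĩ` is incident to some arc `a` with `c a = 0`.
Hence any such tree, partition and class sign yields an EC&R assignment. -/
theorem tree_gives_ECR_assignment
    {V A : Type} [Fintype V] [Fintype A] [DecidableEq V] [DecidableEq A]
    (t h : A → V) (hloop : ∀ a, t a ≠ h a)
    (E : V → A → ℝ)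
    (hE : ∀ v a, E v a = (if t a = v then (1 : ℝ) else 0) - (if h a = v then 1 else 0))
    (I : Finset V) (hne : I.Nonempty)
    (hconn : ∀ u ∈ I, ∀ v ∈ I, Relation.ReflTransGen
      (fun x y => x ∈ I ∧ y ∈ I ∧ x ≠ y ∧
        ∃ a, (t a = x ∨ h a = x) ∧ (t a = y ∨ h a = y)) u v)
    (l : A) (hl : (t l ∈ I ∧ h l ∉ I) ∨ (t l ∉ I ∧ h l ∈ I))
    (ε : ℝ) (hε : ε = if h l ∈ I then (1 : ℝ) else -1)
    (c : A → ℝ) (hc : ∀ a, c a = (if a = l then (1 : ℝ) else 0) + ε * ∑ v ∈ I, E v a) :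
    (I.card ≤ Set.ncard {a : A | c a = 0 ∧ (a = l ∨ t a ∈ I ∨ h a ∈ I)}) ∧
    c l = 0 ∧ (∀ v ∈ I, ∃ a, c a = 0 ∧ (t a = v ∨ h a = v)) := by
  have hsum : ∀ a, ∑ v ∈ I, E v a
      = (if t a ∈ I then (1 : ℝ) else 0) - (if h a ∈ I then 1 else 0) := by
    intro a
    simp only [hE, Finset.sum_sub_distrib, Finset.sum_ite_eq]
  have hcl : c l = 0 := by
    rw [hc, hsum, hε]
    rcases hl with ⟨h1, h2⟩ | ⟨h1, h2⟩ <;> simp [h1, h2]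
  have hin : ∀ a, t a ∈ I → h a ∈ I → a ≠ l ∧ c a = 0 := by
    intro a h1 h2
    have hal : a ≠ l := by
      rintro rfl
      tauto
    refine ⟨hal, ?_⟩
    rw [hc, hsum]
    simp [h1, h2, hal]
  have grow : ∀ k, k + 1 ≤ I.card → ∃ S : Finset V, S ⊆ I ∧ S.card = k + 1 ∧
      ∃ B : Finset A, B.card = k ∧ ∀ a ∈ B, t a ∈ S ∧ h a ∈ S := by
    intro k
    induction k with
    | zero =>
      intro _
      obtain ⟨u, hu⟩ := hne
      exact ⟨{u}, by simpa using hu, by simp, ∅, by simp, by simp⟩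
    | succ k ih =>
      intro hk
      obtain ⟨S, hSI, hS, B, hB, hBS⟩ := ih (by omega)
      obtain ⟨u, hu⟩ : S.Nonempty := Finset.card_pos.mp (by omega)
      obtain ⟨v, hvI, hvS⟩ := Finset.exists_mem_notMem_of_card_lt_card
        (show S.card < I.card by omega)
      obtain ⟨x, hx, y, hy, -, hyI, hxy, a, ha1, ha2⟩ :=
        ecr_exists_leaving S (hconn u (hSI hu) v hvI) hu hvS
      have haB : a ∉ B := by
        intro haB
        obtain ⟨h1, h2⟩ := hBS a haB
        rcases ha2 with rfl | rfl
        · exact hy h1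
        · exact hy h2
      refine ⟨insert y S, Finset.insert_subset hyI hSI, ?_, insert a B, ?_, ?_⟩
      · rw [Finset.card_insert_of_notMem hy, hS]
      · rw [Finset.card_insert_of_notMem haB, hB]
      · intro b hb
        rcases Finset.mem_insert.mp hb with rfl | hb
        · simp only [Finset.mem_insert]
          grind
        · exact ⟨Finset.mem_insert_of_mem (hBS b hb).1, Finset.mem_insert_of_mem (hBS b hb).2⟩
  have hpos := hne.card_pos
  refine ⟨?_, hcl, ?_⟩
  · obtain ⟨S, hSI, hS, B, hB, hBS⟩ := grow (I.card - 1) (by omega)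
    have hlB : l ∉ B := fun hlB =>
      (hin l (hSI (hBS l hlB).1) (hSI (hBS l hlB).2)).1 rfl
    have hcard : I.card = (insert l B).card := by
      rw [Finset.card_insert_of_notMem hlB, hB]
      omega
    rw [hcard, ← Set.ncard_coe_finset]
    refine Set.ncard_le_ncard ?_ (Set.toFinite _)
    intro a ha
    rcases Finset.mem_insert.mp (Finset.mem_coe.mp ha) with rfl | ha
    · exact ⟨hcl, Or.inl rfl⟩
    · have h1 := hSI (hBS a ha).1
      have h2 := hSI (hBS a ha).2
      exact ⟨(hin a h1 h2).2, Or.inr (Or.inl h1)⟩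
  · intro v hv
    by_cases hex : ∃ w ∈ I, w ≠ v
    · obtain ⟨w, hw, hwv⟩ := hex
      obtain ⟨x, hx, y, hy, hxI, hyI, hxy, a, ha1, ha2⟩ :=
        ecr_exists_leaving {v} (hconn v hv w hw) (by simp) (by simpa using hwv)
      obtain rfl := Finset.mem_singleton.mp hx
      refine ⟨a, (hin a ?_ ?_).2, ha1⟩ <;> grind
    · push Not at hex
      refine ⟨l, hcl, ?_⟩
      rcases hl with ⟨h1, -⟩ | ⟨-, h1⟩
      · exact Or.inl (hex _ h1)
      · exact Or.inr (hex _ h1)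
end

section
/- Let M be a finite real matrix all of whose entries lie in {0, 1, −1}, let r₀ be a row index, s ∈ {1, −1}, and let x̄ be an extreme point of the polyhedron {x : x ≥ 0, M·x = s·e_{r₀}}, where e_{r₀} is the standard unit vector of row r₀. Say that a column c covers a row r if M(r,c) ≠ 0 and x̄_c > 0. If every row of M is covered by at most two columns and the row r₀ is covered by at most one column, then every coordinate of x̄ lies in {0,1}. -/
/-- Let `M` be a finite real matrix with entries in `{0, 1, -1}`, `r₀` a row index,
`s ∈ {1, -1}`, and `x̄` an extreme point of `{x : x ≥ 0, M·x = s·e_{r₀}}`.  A column `c`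
covers a row `r` if `M r c ≠ 0` and `x̄ c > 0`.  If every row is covered by at most two
columns and the row `r₀` is covered by at most one column, then every coordinate of `x̄`
lies in `{0, 1}`. -/
theorem extremePoint_pairwise_cover_zero_one
    {R C : Type} [Fintype R] [Fintype C] [DecidableEq R]
    (M : Matrix R C ℝ) (hM : ∀ r c, M r c = 0 ∨ M r c = 1 ∨ M r c = -1)
    (r₀ : R) (s : ℝ) (hs : s = 1 ∨ s = -1)
    (x : C → ℝ)
    (hx : x ∈ Set.extremePoints ℝ
      {x' : C → ℝ | (∀ c, 0 ≤ x' c) ∧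
        M.mulVec x' = fun r => s * (if r = r₀ then 1 else 0)})
    (hcov : ∀ r : R, Set.ncard {c : C | M r c ≠ 0 ∧ 0 < x c} ≤ 2)
    (hbase : Set.ncard {c : C | M r₀ c ≠ 0 ∧ 0 < x c} ≤ 1) :
    ∀ c, x c = 0 ∨ x c = 1 := by
  classical
  obtain ⟨⟨hx0, hMx⟩, hext⟩ := hx
  have hrow : ∀ r, ∑ c, M r c * x c = s * (if r = r₀ then 1 else 0) := fun r => congrFun hMx r
  -- restriction of a row sum to a set containing all covering columns
  have hsum : ∀ r (T : Finset C), (∀ c, M r c ≠ 0 ∧ 0 < x c → c ∈ T) →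
      ∑ c ∈ T, M r c * x c = s * (if r = r₀ then 1 else 0) := by
    intro r T hT
    rw [← hrow r]
    apply Finset.sum_subset (Finset.subset_univ T)
    intro c _ hc
    by_contra hne
    apply hc
    apply hT
    refine ⟨left_ne_zero_of_mul hne, lt_of_le_of_ne (hx0 c) (Ne.symm (right_ne_zero_of_mul hne))⟩
  have hbase1 : ∀ a, M r₀ a ≠ 0 → 0 < x a → x a = 1 := by
    intro a ha hxa
    have h := hsum r₀ {a} (by
      intro c hc
      rw [Finset.mem_singleton]
      exact (Set.ncard_le_one (Set.toFinite _)).1 hbase c hc a ⟨ha, hxa⟩)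
    simp only [Finset.sum_singleton, if_true] at h
    rcases hM r₀ a with h0 | h0 | h0
    · exact absurd h0 ha
    · rw [h0] at h
      rcases hs with hs | hs <;> rw [hs] at h <;> linarith
    · rw [h0] at h
      rcases hs with hs | hs <;> rw [hs] at h <;> linarith
  have hpair : ∀ r a b, r ≠ r₀ → M r a ≠ 0 → 0 < x a → M r b ≠ 0 → 0 < x b → x a = x b := by
    intro r a b hr ha hxa hb hxb
    by_cases hab : a = b
    · rw [hab]
    have hset : ({a, b} : Set C) = {c : C | M r c ≠ 0 ∧ 0 < x c} := by
      apply Set.eq_of_subset_of_ncard_le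
      · rintro c (rfl | rfl)
        · exact ⟨ha, hxa⟩
        · exact ⟨hb, hxb⟩
      · rw [Set.ncard_pair hab]
        exact hcov r
      · exact Set.toFinite _
    have h := hsum r {a, b} (by
      intro c hc
      have : c ∈ ({a, b} : Set C) := by rw [hset]; exact hc
      simpa using this)
    rw [Finset.sum_pair hab, if_neg hr] at h
    rcases hM r a with h0 | h0 | h0
    · exact absurd h0 ha
    all_goals
      rcases hM r b with h1 | h1 | h1
      · exact absurd h1 hb
      all_goals
        rw [h0, h1] at h
        linarith
  -- the perturbation direction
  let d : C → ℝ := fun c => if x c = 1 then 0 else x c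
  have hd : ∀ r, ∑ c, M r c * d c = 0 := by
    intro r
    have key : ∃ k : ℝ, (r = r₀ → k = 0) ∧ ∀ c, M r c * d c = k * (M r c * x c) := by
      have triv : ∀ c k, ¬ (M r c ≠ 0 ∧ 0 < x c) → M r c * d c = k * (M r c * x c) := by
        intro c k hc
        by_cases hm : M r c = 0
        · simp [hm]
        · have : x c = 0 := le_antisymm (not_lt.1 fun h => hc ⟨hm, h⟩) (hx0 c)
          simp [d, this]
      by_cases hr : r = r₀
      · subst hr
        refine ⟨0, fun _ => rfl, fun c => ?_⟩
        by_cases hc : M r c ≠ 0 ∧ 0 < x c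
        · simp [d, hbase1 c hc.1 hc.2]
        · exact triv c 0 hc
      · by_cases hex : ∃ a, M r a ≠ 0 ∧ 0 < x a
        · obtain ⟨a, ha, hxa⟩ := hex
          refine ⟨if x a = 1 then 0 else 1, fun h => absurd h hr, fun c => ?_⟩
          by_cases hc : M r c ≠ 0 ∧ 0 < x c
          · have := hpair r a c hr ha hxa hc.1 hc.2
            rw [this]
            by_cases h1 : x c = 1 <;> simp [d, h1]
          · exact triv c _ hc
        · exact ⟨0, fun h => absurd h hr, fun c => triv c 0 fun h => hex ⟨c, h⟩⟩
    obtain ⟨k, hk, hkc⟩ := key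
    rw [Finset.sum_congr rfl fun c _ => hkc c, ← Finset.mul_sum, hrow r]
    by_cases hr : r = r₀
    · rw [hk hr]; simp
    · simp [hr]
  have hmem : ∀ t : ℝ, -1 ≤ t → t ≤ 1 → (fun c => x c + t * d c) ∈
      {x' : C → ℝ | (∀ c, 0 ≤ x' c) ∧
        M.mulVec x' = fun r => s * (if r = r₀ then 1 else 0)} := by
    intro t ht ht'
    refine ⟨fun c => ?_, ?_⟩
    · have := hx0 c
      by_cases h1 : x c = 1
      · simp [d, h1]
      · simp only [d, h1, if_false]
        nlinarith
    · funext r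
      rw [← hrow r]
      change ∑ c, M r c * (x c + t * d c) = _
      have : ∀ c, M r c * (x c + t * d c) = M r c * x c + t * (M r c * d c) := fun c => by ring
      rw [Finset.sum_congr rfl fun c _ => this c, Finset.sum_add_distrib, ← Finset.mul_sum, hd r]
      ring
  have hfin := hext (hmem 1 (by norm_num) le_rfl) (hmem (-1) le_rfl (by norm_num))
    ⟨1 / 2, 1 / 2, by norm_num, by norm_num, by norm_num, by
      funext c
      simp only [Pi.add_apply, Pi.smul_apply, smul_eq_mul]
      ring⟩
  intro c
  by_cases h1 : x c = 1
  · exact Or.inr h1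
  · left
    have h2 : x c + 1 * d c = x c := congrFun hfin c
    simp only [d, h1, if_false] at h2
    linarith
end

section
/- Let M be a real matrix with rows indexed by a finite type R and columns by a finite type C, let b : R → ℝ, and let x̄ be an extreme point of the polyhedron {x : x ≥ 0, M·x = b}. Then there is no nonempty set J ⊆ C such that x̄_j > 0 for all j ∈ J and, for every row r at which some column of J has a nonzero entry, both b_r = 0 and M(r, c) = 0 for every column c ∉ J with x̄_c > 0. (In other words, at an extreme point the positively weighted columns cannot contain a nonempty isolated block whose rows are all homogeneous.) -/
/-- Let `M` be a real matrix with rows `R` and columns `C` (both finite), `b : R → ℝ`, and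
`x̄` an extreme point of `{x : x ≥ 0, M·x = b}`.  Then there is no nonempty set `J ⊆ C` of
positively weighted columns such that, for every row `r` at which some column of `J` has a
nonzero entry, both `b r = 0` and `M r c = 0` for every positively weighted column `c ∉ J`:
at an extreme point the positive columns cannot contain a nonempty isolated block whose
rows are all homogeneous. -/
theorem extremePoint_no_isolated_homogeneous_block
    {R C : Type} [Fintype R] [Fintype C]
    (M : Matrix R C ℝ) (b : R → ℝ)
    (x : C → ℝ)
    (hx : x ∈ Set.extremePoints ℝ
      {x' : C → ℝ | (∀ c, 0 ≤ x' c) ∧ M.mulVec x' = b}) :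
    ¬∃ J : Set C, J.Nonempty ∧ (∀ j ∈ J, 0 < x j) ∧
      ∀ r : R, (∃ j ∈ J, M r j ≠ 0) →
        b r = 0 ∧ ∀ c ∉ J, 0 < x c → M r c = 0 := by
  classical
  rintro ⟨J, ⟨j, hj⟩, hpos, hrow⟩
  obtain ⟨⟨hx0, hxb⟩, hext⟩ := hx
  have hd : M.mulVec (J.indicator x) = 0 := by
    funext r
    by_cases h : ∃ j ∈ J, M r j ≠ 0
    · obtain ⟨hb, hc⟩ := hrow r h
      have h1 : M.mulVec x r = 0 := by rw [hxb, hb]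
      rw [Pi.zero_apply, ← h1]
      simp only [Matrix.mulVec, dotProduct]
      refine Finset.sum_congr rfl fun c _ => ?_
      by_cases hcJ : c ∈ J
      · simp [hcJ]
      · rcases (hx0 c).eq_or_lt with h0 | h0
        · simp [hcJ, ← h0]
        · simp [hcJ, hc c hcJ h0]
    · push Not at h
      simp only [Matrix.mulVec, dotProduct, Pi.zero_apply]
      refine Finset.sum_eq_zero fun c _ => ?_
      by_cases hcJ : c ∈ J
      · simp [h c hcJ]
      · simp [hcJ]
  have hA : x - J.indicator x ∈ {x' : C → ℝ | (∀ c, 0 ≤ x' c) ∧ M.mulVec x' = b} := by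
    refine ⟨fun c => ?_, by rw [Matrix.mulVec_sub, hd, hxb, sub_zero]⟩
    by_cases hcJ : c ∈ J
    · simp [hcJ]
    · simpa [hcJ] using hx0 c
  have hB : x + J.indicator x ∈ {x' : C → ℝ | (∀ c, 0 ≤ x' c) ∧ M.mulVec x' = b} := by
    refine ⟨fun c => ?_, by rw [Matrix.mulVec_add, hd, hxb, add_zero]⟩
    by_cases hcJ : c ∈ J
    · have := hx0 c
      simp only [Pi.add_apply, Set.indicator_of_mem hcJ]
      linarith
    · simpa [hcJ] using hx0 c
  have hseg : x ∈ openSegment ℝ (x - J.indicator x) (x + J.indicator x) := by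
    refine ⟨1 / 2, 1 / 2, by norm_num, by norm_num, by norm_num, ?_⟩
    funext c
    simp only [Pi.add_apply, Pi.smul_apply, Pi.sub_apply, smul_eq_mul]
    ring
  have heq := congrFun (hext hA hB hseg) j
  have := hpos j hj
  simp only [Pi.sub_apply, Set.indicator_of_mem hj] at heq
  linarith
end

section
/- The convex hull of S equals the projection of the extended formulation: conv(S) = {(x, y, z) ∈ ℝⁿ × ℝᵐ × ℝ^K : y ≥ 0, Σ_{j=1}^m y_j ≤ 1, and there exist vectors w¹, …, w^m ∈ ℝⁿ such that z_k = w^{jc(k)}_{ic(k)} for every k ∈ K; E·w^j ≥ f·y_j and 0 ≤ w^j ≤ u·y_j for every j; and E·(x − Σ_{j=1}^m w^j) ≥ f·(1 − Σ_{j=1}^m y_j) and 0 ≤ x − Σ_{j=1}^m w^j ≤ u·(1 − Σ_{j=1}^m y_j)}. -/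
/-- Rescaling a point of the homogenized polytope by its positive weight. -/
theorem scaled_mem {n τ : ℕ} (E : Fin τ → Fin n → ℝ) (f : Fin τ → ℝ) (u : Fin n → ℝ)
    (v : Fin n → ℝ) (c : ℝ) (hc : 0 < c)
    (h1 : ∀ ti, f ti * c ≤ ∑ i, E ti i * v i)
    (h2 : ∀ i, 0 ≤ v i ∧ v i ≤ u i * c) :
    (∀ ti, f ti ≤ ∑ i, E ti i * (v i / c)) ∧ (∀ i, 0 ≤ v i / c ∧ v i / c ≤ u i) := by
  refine ⟨fun ti => ?_, fun i => ⟨div_nonneg (h2 i).1 hc.le, ?_⟩⟩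
  · have : ∑ i, E ti i * (v i / c) = (∑ i, E ti i * v i) / c := by
      rw [Finset.sum_div]
      exact Finset.sum_congr rfl fun i _ => by ring
    rw [this, le_div_iff₀ hc]
    exact h1 ti
  · rw [div_le_iff₀ hc]
    exact (h2 i).2

/-- Unscaling, valid also for zero weight because the box bounds then force `v = 0`. -/
theorem unscale {n : ℕ} (u : Fin n → ℝ) (v : Fin n → ℝ) (c : ℝ)
    (h2 : ∀ i, 0 ≤ v i ∧ v i ≤ u i * c) (i : Fin n) : c * (v i / c) = v i := by
  by_cases hc : c = 0
  · have := h2 i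
    subst hc
    simp only [mul_zero] at this
    simp only [zero_mul]
    linarith [this.1, this.2]
  · field_simp

/-- The convex hull of the bilinear set
`S = {(x, y, z) ∈ Ξ × Δ_m × ℝ^K : z_k = y_{jc k}·x_{ic k}}`, where
`Ξ = {x : E·x ≥ f, 0 ≤ x ≤ u}` and `Δ_m = {y : y ≥ 0, Σ_j y_j ≤ 1}`, equals the projection
of the disjunctive extended formulation: the points `(x, y, z)` with `y ≥ 0`, `Σ_j y_j ≤ 1`
for which there exist `w¹, …, w^m ∈ ℝⁿ` with `z_k = w^{jc k}_{ic k}` for all `k`,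
`E·w^j ≥ f·y_j` and `0 ≤ w^j ≤ u·y_j` for all `j`, and
`E·(x − Σ_j w^j) ≥ f·(1 − Σ_j y_j)` and `0 ≤ x − Σ_j w^j ≤ u·(1 − Σ_j y_j)`. -/
theorem convexHull_bilinear_eq_extended_formulation
    {n m τ : ℕ} {K : Type} [Fintype K]
    (E : Fin τ → Fin n → ℝ) (f : Fin τ → ℝ) (u : Fin n → ℝ)
    (jc : K → Fin m) (ic : K → Fin n)
    (S : Set ((Fin n → ℝ) × (Fin m → ℝ) × (K → ℝ)))
    (hS : S = {p | (∀ ti, f ti ≤ ∑ i, E ti i * p.1 i) ∧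
      (∀ i, 0 ≤ p.1 i ∧ p.1 i ≤ u i) ∧
      (∀ j, 0 ≤ p.2.1 j) ∧ (∑ j, p.2.1 j) ≤ 1 ∧
      (∀ k, p.2.2 k = p.2.1 (jc k) * p.1 (ic k))}) :
    convexHull ℝ S = {p : (Fin n → ℝ) × (Fin m → ℝ) × (K → ℝ) |
      (∀ j, 0 ≤ p.2.1 j) ∧ (∑ j, p.2.1 j) ≤ 1 ∧
      ∃ w : Fin m → Fin n → ℝ,
        (∀ k, p.2.2 k = w (jc k) (ic k)) ∧
        (∀ j, (∀ ti, f ti * p.2.1 j ≤ ∑ i, E ti i * w j i) ∧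
          (∀ i, 0 ≤ w j i ∧ w j i ≤ u i * p.2.1 j)) ∧
        (∀ ti, f ti * (1 - ∑ j, p.2.1 j) ≤ ∑ i, E ti i * (p.1 i - ∑ j, w j i)) ∧
        (∀ i, 0 ≤ p.1 i - ∑ j, w j i ∧
          p.1 i - ∑ j, w j i ≤ u i * (1 - ∑ j, p.2.1 j))} := by
  apply Set.Subset.antisymm
  · apply convexHull_min
    · rintro ⟨x, y, z⟩ hp
      rw [hS] at hp
      obtain ⟨hE, hb, hy, hy1, hz⟩ := hp
      dsimp only at hE hb hy hy1 hz
      have key : ∀ i, x i - ∑ j, y j * x i = x i * (1 - ∑ j, y j) := by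
        intro i
        rw [← Finset.sum_mul]
        ring
      refine ⟨hy, hy1, fun j i => y j * x i, hz, fun j => ⟨fun ti => ?_, fun i => ⟨?_, ?_⟩⟩,
        fun ti => ?_, fun i => ⟨?_, ?_⟩⟩ <;> dsimp only
      · have : ∑ i, E ti i * (y j * x i) = (∑ i, E ti i * x i) * y j := by
          rw [Finset.sum_mul]
          exact Finset.sum_congr rfl fun i _ => by ring
        rw [this]
        exact mul_le_mul_of_nonneg_right (hE ti) (hy j)
      · exact mul_nonneg (hy j) (hb i).1
      · rw [mul_comm]
        exact mul_le_mul_of_nonneg_right (hb i).2 (hy j)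
      · have : ∑ i, E ti i * (x i - ∑ j, y j * x i)
            = (∑ i, E ti i * x i) * (1 - ∑ j, y j) := by
          rw [Finset.sum_mul]
          exact Finset.sum_congr rfl fun i _ => by rw [key]; ring
        rw [this]
        exact mul_le_mul_of_nonneg_right (hE ti) (by linarith)
      · rw [key]
        exact mul_nonneg (hb i).1 (by linarith)
      · rw [key]
        exact mul_le_mul_of_nonneg_right (hb i).2 (by linarith)
    · rintro ⟨x, y, z⟩ ⟨hy, hy1, w, hz, hw, hE, hb⟩ ⟨x', y', z'⟩ ⟨hy', hy1', w', hz', hw', hE', hb'⟩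
        a b ha hb0 hab
      dsimp only at hy hy1 hz hw hE hb hy' hy1' hz' hw' hE' hb'
      have hys : ∑ j, (a * y j + b * y' j) = a * ∑ j, y j + b * ∑ j, y' j := by
        rw [Finset.sum_add_distrib, Finset.mul_sum, Finset.mul_sum]
      have hws : ∀ i, ∑ j, (a * w j i + b * w' j i) = a * ∑ j, w j i + b * ∑ j, w' j i := by
        intro i
        rw [Finset.sum_add_distrib, Finset.mul_sum, Finset.mul_sum]
      have hlin : ∀ (ti : Fin τ) (p q : Fin n → ℝ), ∑ i, E ti i * (a * p i + b * q i)
          = a * ∑ i, E ti i * p i + b * ∑ i, E ti i * q i := by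
        intro ti p q
        rw [Finset.mul_sum, Finset.mul_sum, ← Finset.sum_add_distrib]
        exact Finset.sum_congr rfl fun i _ => by ring
      have hxs : ∀ i, a * x i + b * x' i - ∑ j, (a * w j i + b * w' j i)
          = a * (x i - ∑ j, w j i) + b * (x' i - ∑ j, w' j i) := by
        intro i
        rw [hws]
        ring
      have h1 : 1 - ∑ j, (a * y j + b * y' j) = a * (1 - ∑ j, y j) + b * (1 - ∑ j, y' j) := by
        rw [hys]
        linear_combination -hab
      have comb : ∀ {p q r s : ℝ}, p ≤ q → r ≤ s → a * p + b * r ≤ a * q + b * s :=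
        fun h h' => add_le_add (mul_le_mul_of_nonneg_left h ha) (mul_le_mul_of_nonneg_left h' hb0)
      refine ⟨fun j => ?_, ?_, fun j i => a * w j i + b * w' j i, fun k => ?_,
        fun j => ⟨fun ti => ?_, fun i => ⟨?_, ?_⟩⟩, fun ti => ?_, fun i => ⟨?_, ?_⟩⟩ <;>
        simp only [Prod.smul_mk, Prod.mk_add_mk, Pi.add_apply, Pi.smul_apply, smul_eq_mul]
      · have := comb (hy j) (hy' j)
        linarith
      · rw [hys]
        have := comb hy1 hy1'
        linarith
      · rw [hz, hz']
      · rw [hlin]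
        have := comb ((hw j).1 ti) ((hw' j).1 ti)
        linarith
      · have := comb ((hw j).2 i).1 ((hw' j).2 i).1
        linarith
      · have := comb ((hw j).2 i).2 ((hw' j).2 i).2
        linarith
      · simp only [hxs]
        rw [h1, hlin ti (fun i => x i - ∑ j, w j i) (fun i => x' i - ∑ j, w' j i)]
        have := comb (hE ti) (hE' ti)
        linarith
      · rw [hxs]
        have := comb (hb i).1 (hb' i).1
        linarith
      · rw [hxs, h1]
        have := comb (hb i).2 (hb' i).2
        linarith
  · rintro ⟨x, y, z⟩ ⟨hy, hy1, w, hz, hw, hE, hb⟩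
    dsimp only at hy hy1 hz hw hE hb
    let wt : Option (Fin m) → ℝ := fun o => o.elim (1 - ∑ j, y j) y
    let P : Option (Fin m) → (Fin n → ℝ) × (Fin m → ℝ) × (K → ℝ) := fun o =>
      o.elim (fun i => (x i - ∑ j, w j i) / (1 - ∑ j, y j), 0, 0)
        (fun j => (fun i => w j i / y j, Pi.single j 1,
          fun k => (Pi.single j 1 : Fin m → ℝ) (jc k) * (w j (ic k) / y j)))
    have hmem : (∑ᶠ o, wt o • P o) ∈ convexHull ℝ S := by
      apply (convex_convexHull ℝ S).finsum_mem
      · rintro (_ | j)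
        · simp only [wt, Option.elim]
          linarith
        · exact hy j
      · rw [finsum_eq_sum_of_fintype, Fintype.sum_option]
        simp [wt]
      · rintro (_ | j) ho
        · apply subset_convexHull
          have hpos : 0 < 1 - ∑ j, y j := lt_of_le_of_ne (by linarith) (Ne.symm ho)
          obtain ⟨h1, h2⟩ := scaled_mem E f u (fun i => x i - ∑ j, w j i) _ hpos hE hb
          rw [hS]
          refine ⟨h1, h2, ?_, ?_, ?_⟩ <;> simp [P]
        · apply subset_convexHull
          have hpos : 0 < y j := lt_of_le_of_ne (hy j) (Ne.symm ho)
          obtain ⟨h1, h2⟩ := scaled_mem E f u (w j) _ hpos (hw j).1 (hw j).2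
          rw [hS]
          refine ⟨h1, h2, ?_, ?_, ?_⟩
          · intro l
            simp only [P, Option.elim, Pi.single_apply]
            split_ifs <;> norm_num
          · simp [P]
          · intro k
            rfl
    have heq : (∑ᶠ o, wt o • P o) = (x, y, z) := by
      rw [finsum_eq_sum_of_fintype, Fintype.sum_option]
      refine Prod.ext ?_ (Prod.ext ?_ ?_)
      · funext i
        simp only [wt, P, Option.elim, Prod.fst_add, Prod.smul_fst, Prod.fst_sum, Pi.add_apply,
          Pi.smul_apply, Finset.sum_apply, smul_eq_mul]
        rw [unscale u (fun i => x i - ∑ j, w j i) _ hb i,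
          Finset.sum_congr rfl fun j _ => unscale u (w j) _ (hw j).2 i]
        ring
      · funext l
        simp [wt, P, Prod.snd_sum, Prod.fst_sum, Finset.sum_apply, Pi.single_apply]
      · funext k
        have : ∀ j, y j * ((Pi.single j 1 : Fin m → ℝ) (jc k) * (w j (ic k) / y j))
            = if jc k = j then w j (ic k) else 0 := by
          intro j
          rw [Pi.single_apply]
          split_ifs
          · rw [one_mul, unscale u (w j) _ (hw j).2]
          · simp
        simp [wt, P, Prod.snd_sum, Finset.sum_apply, this, hz]
    rw [heq] at hmem
    exact hmem
end

section
/- Every extreme point (x̄, ȳ, z̄) of the bilinear set S has binary y-components: ȳ_j ∈ {0,1} for every j = 1, …, m; consequently, since Σ_j ȳ_j ≤ 1, the vector ȳ is either the zero vector or a standard unit vector of ℝᵐ. -/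
/-- Every extreme point `(x̄, ȳ, z̄)` of the bilinear set
`S = {(x, y, z) ∈ Ξ × Δ_m × ℝ^K : z_k = y_{jc k}·x_{ic k}}`, where
`Ξ = {x : E·x ≥ f, 0 ≤ x ≤ u}` and `Δ_m = {y : y ≥ 0, Σ_j y_j ≤ 1}`, has binary
`y`-components: `ȳ_j ∈ {0, 1}` for every `j`; consequently, since `Σ_j ȳ_j ≤ 1`, the
vector `ȳ` is either the zero vector or a standard unit vector of `ℝᵐ`. -/
theorem extremePoint_bilinear_y_binary
    {n m τ : ℕ} {K : Type} [Fintype K]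
    (E : Fin τ → Fin n → ℝ) (f : Fin τ → ℝ) (u : Fin n → ℝ)
    (jc : K → Fin m) (ic : K → Fin n)
    (S : Set ((Fin n → ℝ) × (Fin m → ℝ) × (K → ℝ)))
    (hS : S = {p | (∀ ti, f ti ≤ ∑ i, E ti i * p.1 i) ∧
      (∀ i, 0 ≤ p.1 i ∧ p.1 i ≤ u i) ∧
      (∀ j, 0 ≤ p.2.1 j) ∧ (∑ j, p.2.1 j) ≤ 1 ∧
      (∀ k, p.2.2 k = p.2.1 (jc k) * p.1 (ic k))})
    (p : (Fin n → ℝ) × (Fin m → ℝ) × (K → ℝ))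
    (hp : p ∈ Set.extremePoints ℝ S) :
    (∀ j, p.2.1 j = 0 ∨ p.2.1 j = 1) ∧
    (p.2.1 = 0 ∨ ∃ j : Fin m, p.2.1 = fun j' => if j' = j then 1 else 0) := by
  subst hS
  obtain ⟨⟨hE, hx, hy, hs, hz⟩, hext⟩ := hp
  have hbin : ∀ j, p.2.1 j = 0 ∨ p.2.1 j = 1 := by
    intro j
    by_contra hcon
    push Not at hcon
    obtain ⟨h0, h1⟩ := hcon
    have hpos : 0 < p.2.1 j := lt_of_le_of_ne (hy j) (Ne.symm h0)
    have hle : p.2.1 j ≤ ∑ i, p.2.1 i :=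
      Finset.single_le_sum (fun i _ => hy i) (Finset.mem_univ j)
    have hlt : p.2.1 j < 1 := lt_of_le_of_ne (hle.trans hs) h1
    have hc : 0 < 1 - p.2.1 j := by linarith
    let a : Fin m → ℝ := fun i => if i = j then 1 else 0
    let b : Fin m → ℝ := fun i => (p.2.1 i - p.2.1 j * a i) / (1 - p.2.1 j)
    have hsa : ∑ i, a i = 1 := by simp [a]
    have hcomb : ∀ i, p.2.1 j * a i + (1 - p.2.1 j) * b i = p.2.1 i := by
      intro i
      simp only [b]
      field_simp
      ring
    have hA := @hext (p.1, a, fun k => a (jc k) * p.1 (ic k))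
      ⟨hE, hx, fun i => by simp only [a]; split_ifs <;> norm_num, hsa.le, fun k => rfl⟩
      (p.1, b, fun k => b (jc k) * p.1 (ic k))
      ⟨hE, hx, fun i => by
          simp only [b, a]
          apply div_nonneg _ hc.le
          split_ifs with h
          · subst h; simp
          · simpa using hy i,
        by
          simp only [b]
          rw [← Finset.sum_div, Finset.sum_sub_distrib, ← Finset.mul_sum, hsa, div_le_one hc]
          linarith, fun k => rfl⟩
      ⟨p.2.1 j, 1 - p.2.1 j, hpos, hc, by ring, by
        refine Prod.ext ?_ (Prod.ext ?_ ?_)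
        · ext i
          simp [← add_mul]
        · ext i
          simpa using hcomb i
        · ext k
          have := hcomb (jc k)
          simp only [Prod.smul_mk, Prod.mk_add_mk, Pi.add_apply, Pi.smul_apply, smul_eq_mul]
          rw [hz k, ← this]
          simp only [hcomb]
          rw [← hcomb (jc k)]
          ring⟩
    have h2 : a j = p.2.1 j := congrFun (congrArg (fun q => q.2.1) hA) j
    apply h1
    rw [← h2]
    simp [a]
  refine ⟨hbin, ?_⟩
  by_cases h : ∃ j, p.2.1 j = 1
  · obtain ⟨j, hj⟩ := h
    right
    refine ⟨j, funext fun i => ?_⟩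
    split_ifs with hij
    · rw [hij, hj]
    · have h3 : p.2.1 i + p.2.1 j ≤ ∑ k, p.2.1 k := by
        rw [← Finset.sum_pair hij]
        exact Finset.sum_le_sum_of_subset_of_nonneg (Finset.subset_univ _) (fun k _ _ => hy k)
      have := hy i
      linarith
  · left
    ext j
    exact (hbin j).resolve_right (fun hj => h ⟨j, hj⟩)
end
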